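/- arXiv:1208.2232 — 2 statements merged into one kernel-verified Lean document; each statement's English description precedes it below -/
import Mathlib

section
/- There is a short exact sequence of graded left A(1)-modules 0 → Σ² A(1)/(Sq²) → A(1)/(Sq¹) → F₂ → 0, where F₂ is the trivial module concentrated in degree 0, the surjection sends the generator to 1, and the injection sends the generator of Σ² A(1)/(Sq²) to the class of Sq². -/
noncomputable section

/-- Relations defining A(1): (Sq¹)² = 0, Sq²Sq² = Sq¹Sq²Sq¹, Sq²Sq¹Sq²Sq¹ = Sq¹Sq²Sq¹Sq². -/
inductive A1Rel : FreeAlgebra (ZMod 2) (Fin 2) → FreeAlgebra (ZMod 2) (Fin 2) → Prop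
  | sq1_sq1 : A1Rel (FreeAlgebra.ι (ZMod 2) (0 : Fin 2) * FreeAlgebra.ι (ZMod 2) 0) 0
  | adem : A1Rel (FreeAlgebra.ι (ZMod 2) (1 : Fin 2) * FreeAlgebra.ι (ZMod 2) 1)
      (FreeAlgebra.ι (ZMod 2) (0 : Fin 2) * FreeAlgebra.ι (ZMod 2) 1 * FreeAlgebra.ι (ZMod 2) 0)
  | top : A1Rel
      (FreeAlgebra.ι (ZMod 2) (1 : Fin 2) * FreeAlgebra.ι (ZMod 2) 0 *
        FreeAlgebra.ι (ZMod 2) 1 * FreeAlgebra.ι (ZMod 2) 0)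
      (FreeAlgebra.ι (ZMod 2) (0 : Fin 2) * FreeAlgebra.ι (ZMod 2) 1 *
        FreeAlgebra.ι (ZMod 2) 0 * FreeAlgebra.ι (ZMod 2) 1)

/-- The algebra A(1), subalgebra of the mod-2 Steenrod algebra generated by Sq¹, Sq². -/
abbrev A1 := RingQuot A1Rel

def Sq1 : A1 := RingQuot.mkAlgHom (ZMod 2) A1Rel (FreeAlgebra.ι (ZMod 2) 0)
def Sq2 : A1 := RingQuot.mkAlgHom (ZMod 2) A1Rel (FreeAlgebra.ι (ZMod 2) 1)
def Sq3 : A1 := Sq1 * Sq2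

/-- Generators, for building monomial words. -/
def A1gen : Fin 2 → A1
  | 0 => Sq1
  | 1 => Sq2

/-- Weight of a word: Sq¹ has degree 1, Sq² has degree 2. -/
def A1wt (l : List (Fin 2)) : ℕ := (l.map fun i => (i : ℕ) + 1).sum

/-- The product of a word of generators. -/
def A1word (l : List (Fin 2)) : A1 := (l.map A1gen).prod

/-- The degree-`n` graded component of A(1): the F₂-span of monomials of weight `n`. -/
def A1deg (n : ℕ) : Submodule (ZMod 2) A1 :=
  Submodule.span (ZMod 2) {x | ∃ l, A1wt l = n ∧ x = A1word l}

/-- The degree-`n` component of a cyclic module A(1)/I. -/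
def A1qdeg (I : Submodule A1 A1) (n : ℕ) : Submodule (ZMod 2) (A1 ⧸ I) :=
  Submodule.map (I.mkQ.restrictScalars (ZMod 2)) (A1deg n)

/-!
Exactness in the middle and on the right is formal: the image of right multiplication by `Sq²` in
`A(1)/(Sq¹)` is generated by the class of `Sq²`. The content is injectivity on the left. The
relations show that `1, Sq¹, Sq²Sq¹` span `A(1)/(Sq²)` over `F₂`, and multiplying them on the right
by `Sq²` gives `Sq², Sq¹Sq², Sq²Sq¹Sq²`. These stay linearly independent modulo `(Sq¹)`, because an
explicit four-dimensional module with a generator killed by `Sq¹` separates them.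
-/

section Quotients

variable {R M N : Type*} [Ring R] [AddCommGroup M] [Module R M] [AddCommGroup N] [Module R N]

theorem range_mapQ_eq_ker_factor {p : Submodule R M} {q q' : Submodule R N} {f : M →ₗ[R] N}
    (hf : p ≤ q.comap f) (hq : q ≤ q') (hq' : q ⊔ LinearMap.range f = q') :
    LinearMap.range (p.mapQ q f hf) = LinearMap.ker (Submodule.factor hq) := by
  rw [Submodule.range_mapQ, Submodule.ker_mapQ, Submodule.comap_id, ← hq', Submodule.map_sup,
    Submodule.mkQ_map_self, bot_sup_eq]

theorem span_singleton_mkQ_one (I : Submodule R R) : Submodule.span R {I.mkQ 1} = ⊤ := by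
  rw [← Set.image_singleton, ← Submodule.map_span, ← Ideal.span, Ideal.span_singleton_one,
    Submodule.map_top, Submodule.range_mkQ]

theorem mkQ_mul_eq_zero {s : Set R} {r : R} (hr : r ∈ s) (x : R) :
    (Submodule.span R s).mkQ (x * r) = 0 :=
  (Submodule.Quotient.mk_eq_zero _).2 (Submodule.smul_mem _ x (Submodule.subset_span hr))

end Quotients

section GeneratedAlgebras

variable {K A M : Type*} [CommSemiring K] [Semiring A] [Algebra K A] [AddCommMonoid M] [Module K M]
  [Module A M] [IsScalarTower K A M]

theorem smul_mem_of_adjoin_eq_top {s : Set A} (hs : Algebra.adjoin K s = ⊤)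
    {N : Submodule K M} (hN : ∀ a ∈ s, ∀ m ∈ N, a • m ∈ N)
    (a : A) {m : M} (hm : m ∈ N) : a • m ∈ N := by
  have ha : a ∈ Algebra.adjoin K s := hs ▸ Algebra.mem_top
  induction ha using Algebra.adjoin_induction generalizing m with
  | mem a ha => exact hN a ha m hm
  | algebraMap c => simpa only [algebraMap_smul] using N.smul_mem c hm
  | add a b _ _ ha hb => simpa only [add_smul] using N.add_mem (ha hm) (hb hm)
  | mul a b _ _ ha hb => simpa only [mul_smul] using ha (hb hm)

theorem span_eq_top_of_adjoin_eq_top {s : Set A} (hs : Algebra.adjoin K s = ⊤)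
    {t : Set M} (ht : Submodule.span A t = ⊤)
    (hst : ∀ a ∈ s, ∀ m ∈ t, a • m ∈ Submodule.span K t) : Submodule.span K t = ⊤ := by
  have stable : ∀ a ∈ s, ∀ m ∈ Submodule.span K t, a • m ∈ Submodule.span K t := by
    intro a ha
    have hle : Submodule.span K t ≤ (Submodule.span K t).comap (Algebra.lsmul K K M a) :=
      Submodule.span_le.2 (hst a ha)
    exact hle
  refine Submodule.eq_top_iff'.2 fun m => ?_
  have hm : m ∈ Submodule.span A t := ht ▸ Submodule.mem_top
  induction hm using Submodule.span_induction with
  | mem m hm => exact Submodule.subset_span hm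
  | zero => exact zero_mem _
  | add m n _ _ hm hn => exact add_mem hm hn
  | smul a m _ hm => exact smul_mem_of_adjoin_eq_top hs stable a hm

end GeneratedAlgebras

section CyclicModules

variable {K A M : Type*} [CommRing K] [Ring A] [Algebra K A] [AddCommGroup M] [Module K M]

theorem linearIndependent_mkQ_of_apply {ρ : A →ₐ[K] Module.End K M} {v : M} {s : Set A}
    (hs : ∀ a ∈ s, ρ a v = 0) {ι : Type*} {w : ι → A}
    (hw : LinearIndependent K fun i => ρ (w i) v) :
    LinearIndependent K fun i => (Submodule.span A s).mkQ (w i) := by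
  let _ : Module A M := Module.compHom M (ρ : A →+* Module.End K M)
  have : IsScalarTower K A M :=
    ⟨fun c a m => congrArg (fun e : Module.End K M => e m) (map_smul ρ c a)⟩
  let orbit : (A ⧸ Submodule.span A s) →ₗ[A] M :=
    (Submodule.span A s).liftQ (LinearMap.toSpanSingleton A M v) (Submodule.span_le.2 hs)
  exact .of_comp (orbit.restrictScalars K) hw

theorem finrank_quotient_span_eq_one [Nontrivial K] {s : Set A} (hs : Algebra.adjoin K s = ⊤)
    {ε : A →ₐ[K] K} (hε : ∀ a ∈ s, ε a = 0) :
    Module.finrank K (A ⧸ Submodule.span A s) = 1 := by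
  refine Module.finrank_of_bijective_toSpanSingleton (x := (Submodule.span A s).mkQ 1) ⟨?_, ?_⟩
  · have hker : Submodule.span A s ≤ RingHom.ker ε := Submodule.span_le.2 hε
    refine (injective_iff_map_eq_zero _).2 fun c hc => ?_
    have hmem : algebraMap K A c ∈ Submodule.span A s := by
      rw [Algebra.algebraMap_eq_smul_one]
      exact (Submodule.Quotient.mk_eq_zero _).1 hc
    simpa using hker hmem
  · rw [← LinearMap.range_eq_top, LinearMap.range_toSpanSingleton]
    refine span_eq_top_of_adjoin_eq_top hs (span_singleton_mkQ_one _) ?_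
    rintro a ha _ rfl
    rw [← map_smul, smul_eq_mul, mul_one, ← one_mul a, mkQ_mul_eq_zero ha]
    exact zero_mem _

end CyclicModules

namespace A1

theorem Sq1_mul_Sq1 : Sq1 * Sq1 = 0 := by
  simpa [Sq1] using RingQuot.mkAlgHom_rel (ZMod 2) A1Rel.sq1_sq1

theorem Sq2_mul_Sq2 : Sq2 * Sq2 = Sq1 * Sq2 * Sq1 := by
  simpa [Sq1, Sq2] using RingQuot.mkAlgHom_rel (ZMod 2) A1Rel.adem

theorem adjoin_Sq1_Sq2 : Algebra.adjoin (ZMod 2) {Sq1, Sq2} = ⊤ := by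
  have himage : RingQuot.mkAlgHom (ZMod 2) A1Rel '' Set.range (FreeAlgebra.ι (ZMod 2)) =
      {Sq1, Sq2} := by
    ext x
    simp [Sq1, Sq2, Fin.exists_fin_two, eq_comm]
  rw [← himage, ← AlgHom.map_adjoin, FreeAlgebra.adjoin_range_ι, Algebra.map_top,
    AlgHom.range_eq_top]
  exact RingQuot.mkAlgHom_surjective (ZMod 2) A1Rel

section Lift

variable {B : Type*} [Semiring B] [Algebra (ZMod 2) B] (s t : B) (hs : s * s = 0)
  (hst : t * t = s * t * s) (htop : t * s * t * s = s * t * s * t)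

/-- The universal property of `A(1)`: two elements satisfying its defining relations determine
an algebra homomorphism out of it. -/
def lift : A1 →ₐ[ZMod 2] B :=
  RingQuot.liftAlgHom (ZMod 2) ⟨FreeAlgebra.lift (ZMod 2) ![s, t], by
    rintro _ _ (_ | _ | _)
    · simpa using hs
    · simpa using hst
    · simpa using htop⟩

@[simp]
theorem lift_Sq1 : lift s t hs hst htop Sq1 = s := by
  simp [lift, Sq1]

@[simp]
theorem lift_Sq2 : lift s t hs hst htop Sq2 = t := by
  simp [lift, Sq2]

end Lift

/-- The augmentation `A(1) → F₂`, killing both generators. -/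
def augmentation : A1 →ₐ[ZMod 2] ZMod 2 :=
  lift 0 0 (by simp) (by simp) (by simp)

/-- The left action of `A(1)` on `A(1)/(Sq¹)` in coordinates `1, Sq², Sq¹Sq², Sq²Sq¹Sq²`. It is
built from the relations of `A(1)` alone, and so certifies that these four classes are linearly
independent. -/
def rep : A1 →ₐ[ZMod 2] Module.End (ZMod 2) (Fin 4 → ZMod 2) :=
  (Matrix.toLinAlgEquiv' : Matrix (Fin 4) (Fin 4) (ZMod 2) ≃ₐ[ZMod 2] _).toAlgHom.comp <|
    lift !![0, 0, 0, 0; 0, 0, 0, 0; 0, 1, 0, 0; 0, 0, 0, 0]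
      !![0, 0, 0, 0; 1, 0, 0, 0; 0, 0, 0, 0; 0, 0, 1, 0] (by decide) (by decide) (by decide)

theorem rep_Sq1_apply (v : Fin 4 → ZMod 2) : rep Sq1 v = ![0, 0, v 1, 0] := by
  ext i
  fin_cases i <;> simp [rep, Matrix.mulVec, dotProduct, Fin.sum_univ_four]

theorem rep_Sq2_apply (v : Fin 4 → ZMod 2) : rep Sq2 v = ![0, v 0, 0, v 2] := by
  ext i
  fin_cases i <;> simp [rep, Matrix.mulVec, dotProduct, Fin.sum_univ_four]

theorem finrank_quotient_Sq1_Sq2 :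
    Module.finrank (ZMod 2) (A1 ⧸ Submodule.span A1 {Sq1, Sq2}) = 1 :=
  finrank_quotient_span_eq_one adjoin_Sq1_Sq2 (ε := augmentation) (by simp [augmentation])

theorem word_mem_span_Sq1_Sq2 {l : List (Fin 2)} (hl : l ≠ []) :
    A1word l ∈ Submodule.span A1 {Sq1, Sq2} := by
  obtain ⟨l, i, rfl⟩ := l.eq_nil_or_concat'.resolve_left hl
  have hi : A1gen i ∈ Submodule.span A1 {Sq1, Sq2} := by
    apply Submodule.subset_span
    fin_cases i <;> simp [A1gen]
  simpa [A1word] using Submodule.smul_mem _ (l.map A1gen).prod hi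

theorem A1qdeg_span_Sq1_Sq2_eq_bot {n : ℕ} (hn : n ≠ 0) :
    A1qdeg (Submodule.span A1 {Sq1, Sq2}) n = ⊥ := by
  rw [A1qdeg, A1deg, Submodule.map_span, Submodule.span_eq_bot]
  rintro _ ⟨_, ⟨l, hl, rfl⟩, rfl⟩
  refine (Submodule.Quotient.mk_eq_zero _).2 (word_mem_span_Sq1_Sq2 ?_)
  rintro rfl
  exact hn hl.symm

theorem mul_mem_A1deg {m n : ℕ} {x y : A1} (hx : x ∈ A1deg m) (hy : y ∈ A1deg n) :
    x * y ∈ A1deg (m + n) := by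
  have hle : A1deg m * A1deg n ≤ A1deg (m + n) := by
    rw [A1deg, A1deg, Submodule.span_mul_span]
    refine Submodule.span_mono ?_
    rintro _ ⟨_, ⟨k, rfl, rfl⟩, _, ⟨l, rfl, rfl⟩, rfl⟩
    exact ⟨k ++ l, by simp [A1wt], by simp [A1word]⟩
  exact hle (Submodule.mul_mem_mul hx hy)

theorem Sq2_mem_A1deg : Sq2 ∈ A1deg 2 :=
  Submodule.subset_span ⟨[1], by simp [A1wt], by simp [A1word, A1gen]⟩

theorem mapQ_toSpanSingleton_mem_A1qdeg {I J : Submodule A1 A1} {r : A1}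
    (h : I ≤ J.comap (LinearMap.toSpanSingleton A1 A1 r)) {k n : ℕ} (hr : r ∈ A1deg k)
    {x : A1 ⧸ I} (hx : x ∈ A1qdeg I n) :
    I.mapQ J (LinearMap.toSpanSingleton A1 A1 r) h x ∈ A1qdeg J (n + k) := by
  obtain ⟨y, hy, rfl⟩ := hx
  exact ⟨y * r, mul_mem_A1deg hy hr, rfl⟩

/-- Monomials whose classes form an `F₂`-basis of `A(1)/(Sq²)`. -/
def monomialsModSq2 : Fin 3 → A1 :=
  ![1, Sq1, Sq2 * Sq1]

theorem mkQ_Sq1_mul_monomialsModSq2 (i : Fin 3) :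
    (Submodule.span A1 {Sq2}).mkQ (Sq1 * monomialsModSq2 i) =
      ![(Submodule.span A1 {Sq2}).mkQ (monomialsModSq2 1), 0, 0] i := by
  fin_cases i
  · exact congrArg _ (mul_one Sq1)
  · exact (congrArg _ Sq1_mul_Sq1).trans (map_zero _)
  · have hmul : Sq1 * (Sq2 * Sq1) = Sq2 * Sq2 := by rw [Sq2_mul_Sq2, mul_assoc]
    exact (congrArg _ hmul).trans (mkQ_mul_eq_zero (Set.mem_singleton Sq2) Sq2)

theorem mkQ_Sq2_mul_monomialsModSq2 (i : Fin 3) :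
    (Submodule.span A1 {Sq2}).mkQ (Sq2 * monomialsModSq2 i) =
      ![0, (Submodule.span A1 {Sq2}).mkQ (monomialsModSq2 2), 0] i := by
  fin_cases i
  · have hmul : Sq2 * 1 = 1 * Sq2 := by rw [mul_one, one_mul]
    exact (congrArg _ hmul).trans (mkQ_mul_eq_zero (Set.mem_singleton Sq2) 1)
  · rfl
  · have hmul : Sq2 * (Sq2 * Sq1) = 0 := by
      rw [← mul_assoc, Sq2_mul_Sq2, mul_assoc, Sq1_mul_Sq1, mul_zero]
    exact (congrArg _ hmul).trans (map_zero _)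

theorem span_mkQ_monomialsModSq2 :
    Submodule.span (ZMod 2) (Set.range fun i => (Submodule.span A1 {Sq2}).mkQ (monomialsModSq2 i)) =
      ⊤ := by
  refine span_eq_top_of_adjoin_eq_top adjoin_Sq1_Sq2 ?_ ?_
  · rw [← top_le_iff, ← span_singleton_mkQ_one]
    exact Submodule.span_mono (Set.singleton_subset_iff.2 ⟨0, rfl⟩)
  · have mem (i : Fin 3) := Submodule.subset_span (R := ZMod 2)
      (Set.mem_range_self (f := fun i => (Submodule.span A1 {Sq2}).mkQ (monomialsModSq2 i)) i)
    rintro a (rfl | rfl) _ ⟨i, rfl⟩ <;> dsimp only <;> rw [← map_smul, smul_eq_mul]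
    · rw [mkQ_Sq1_mul_monomialsModSq2]
      fin_cases i
      exacts [mem 1, zero_mem _, zero_mem _]
    · rw [mkQ_Sq2_mul_monomialsModSq2]
      fin_cases i
      exacts [zero_mem _, mem 2, zero_mem _]

theorem linearIndependent_mkQ_monomialsModSq2_mul_Sq2 :
    LinearIndependent (ZMod 2) fun i =>
      (Submodule.span A1 {Sq1}).mkQ (monomialsModSq2 i * Sq2) := by
  have hrep : (fun i => rep (monomialsModSq2 i * Sq2) ![1, 0, 0, 0]) =
      fun i : Fin 3 => Pi.single i.succ 1 := by
    funext i
    rw [map_mul, Module.End.mul_apply, rep_Sq2_apply]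
    fin_cases i
    · change rep 1 ![0, 1, 0, 0] = _
      rw [map_one]
      decide
    · change rep Sq1 ![0, 1, 0, 0] = _
      rw [rep_Sq1_apply]
      decide
    · change rep (Sq2 * Sq1) ![0, 1, 0, 0] = _
      rw [map_mul, Module.End.mul_apply, rep_Sq1_apply, rep_Sq2_apply]
      decide
  refine linearIndependent_mkQ_of_apply (ρ := rep) (v := ![1, 0, 0, 0]) ?_ ?_
  · simp [rep_Sq1_apply]
  · rw [hrep]
    exact (Pi.linearIndependent_single_one (Fin 4) (ZMod 2)).comp _ (Fin.succ_injective 3)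

theorem span_Sq2_le_comap :
    Submodule.span A1 {Sq2} ≤
      (Submodule.span A1 {Sq1}).comap (LinearMap.toSpanSingleton A1 A1 Sq2) := by
  rw [Submodule.span_singleton_le_iff_mem, Submodule.mem_comap,
    LinearMap.toSpanSingleton_apply, smul_eq_mul, Sq2_mul_Sq2]
  exact Submodule.smul_mem _ _ (Submodule.mem_span_singleton_self Sq1)

/-- Right multiplication by `Sq²`, as the map `Σ² A(1)/(Sq²) → A(1)/(Sq¹)`; the shift is not part
of the type. -/
def mulSq2 : (A1 ⧸ Submodule.span A1 {Sq2}) →ₗ[A1] (A1 ⧸ Submodule.span A1 {Sq1}) :=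
  Submodule.mapQ _ _ (LinearMap.toSpanSingleton A1 A1 Sq2) span_Sq2_le_comap

theorem mulSq2_mkQ (x : A1) :
    mulSq2 ((Submodule.span A1 {Sq2}).mkQ x) = (Submodule.span A1 {Sq1}).mkQ (x * Sq2) :=
  rfl

theorem mulSq2_injective : Function.Injective mulSq2 :=
  LinearMap.injective_of_linearIndependent (f := mulSq2.restrictScalars (ZMod 2))
    span_mkQ_monomialsModSq2 linearIndependent_mkQ_monomialsModSq2_mul_Sq2

end A1

/-- The short exact sequence of graded left A(1)-modules
`0 → Σ² A(1)/(Sq²) → A(1)/(Sq¹) → F₂ → 0`, where F₂ = A(1)/(Sq¹,Sq²) is the trivial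
module concentrated in degree 0, the surjection sends the generator to 1 (the canonical
projection), and the injection sends the generator to the class of Sq² (raising
degrees by 2). -/
theorem ses_ko_HZ :
    (Module.finrank (ZMod 2) (A1 ⧸ (Submodule.span A1 {Sq1, Sq2})) = 1 ∧
      ∀ n : ℕ, n ≠ 0 → A1qdeg (Submodule.span A1 {Sq1, Sq2}) n = ⊥) ∧
    ∃ f : (A1 ⧸ (Submodule.span A1 {Sq2})) →ₗ[A1] (A1 ⧸ (Submodule.span A1 {Sq1})),
    ∃ g : (A1 ⧸ (Submodule.span A1 {Sq1})) →ₗ[A1] (A1 ⧸ (Submodule.span A1 {Sq1, Sq2})),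
      f ((Submodule.span A1 {Sq2}).mkQ 1) = (Submodule.span A1 {Sq1}).mkQ Sq2 ∧
      (∀ x : A1, g ((Submodule.span A1 {Sq1}).mkQ x) = (Submodule.span A1 {Sq1, Sq2}).mkQ x) ∧
      Function.Injective f ∧ Function.Surjective g ∧
      LinearMap.range f = LinearMap.ker g ∧
      (∀ n : ℕ, ∀ x ∈ A1qdeg (Submodule.span A1 {Sq2}) n,
        f x ∈ A1qdeg (Submodule.span A1 {Sq1}) (n + 2)) := by
  have hle : Submodule.span A1 {Sq1} ≤ Submodule.span A1 {Sq1, Sq2} :=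
    Submodule.span_mono (by simp)
  have hsup : Submodule.span A1 {Sq1} ⊔ LinearMap.range (LinearMap.toSpanSingleton A1 A1 Sq2) =
      Submodule.span A1 {Sq1, Sq2} := by
    rw [LinearMap.range_toSpanSingleton, ← Submodule.span_insert]
  exact ⟨⟨A1.finrank_quotient_Sq1_Sq2, fun n hn => A1.A1qdeg_span_Sq1_Sq2_eq_bot hn⟩,
    A1.mulSq2, Submodule.factor hle, by rw [A1.mulSq2_mkQ, one_mul], fun x => rfl,
    A1.mulSq2_injective, Submodule.factor_surjective hle,
    range_mapQ_eq_ker_factor A1.span_Sq2_le_comap hle hsup,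
    fun n x hx => A1.mapQ_toSpanSingleton_mem_A1qdeg A1.span_Sq2_le_comap A1.Sq2_mem_A1deg hx⟩

end
end

section
/- Right multiplication by Sq³ = Sq¹Sq² on A(1) has kernel equal to the left ideal generated by Sq¹ and Sq²Sq³; consequently there is a short exact sequence of graded left A(1)-modules 0 → Σ³ A(1)/(Sq¹, Sq²Sq³) → A(1) → A(1)/(Sq³) → 0, where the first map sends the generator to Sq³. -/
noncomputable section

/-!
As a vector space, A(1) is the sum of `I = (Sq¹, Sq²Sq³)` and the span of `1, Sq², Sq³`, since that
sum contains `1` and is stable under left multiplication by `Sq¹` and `Sq²`. Right multiplication by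
`Sq³` kills `I`, and it sends `1, Sq², Sq³` to `Sq³, Sq²Sq³, Sq³Sq³`, which the regular
representation shows to be linearly independent. Hence its kernel is exactly `I`.
-/

section SpanModuloSubmodule

lemma eq_top_of_adjoin_eq_top_of_mul_mem {R A : Type*} [CommSemiring R] [Semiring A] [Algebra R A]
    {s : Set A} (hs : Algebra.adjoin R s = ⊤) {V : Submodule R A} (one_mem : 1 ∈ V)
    (mul_mem : ∀ a ∈ s, ∀ x ∈ V, a * x ∈ V) : V = ⊤ := by
  rw [eq_top_iff, ← Algebra.top_toSubmodule, ← hs, Algebra.adjoin_eq_span, Submodule.span_le]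
  intro x hx
  induction hx using Submonoid.closure_induction_left with
  | one => exact one_mem
  | mul_left a ha x _ hx => exact mul_mem a ha x hx

lemma span_range_sup_restrictScalars_eq_top {R A ι : Type*} [CommSemiring R] [Semiring A]
    [Algebra R A] {s : Set A} (hs : Algebra.adjoin R s = ⊤) {I : Submodule A A} {v : ι → A}
    (one_mem : 1 ∈ Submodule.span R (Set.range v) ⊔ I.restrictScalars R)
    (mul_mem : ∀ a ∈ s, ∀ i, a * v i ∈ Submodule.span R (Set.range v) ⊔ I.restrictScalars R) :
    Submodule.span R (Set.range v) ⊔ I.restrictScalars R = ⊤ := by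
  set V := Submodule.span R (Set.range v) ⊔ I.restrictScalars R
  refine eq_top_of_adjoin_eq_top_of_mul_mem hs one_mem fun a ha => ?_
  suffices V ≤ V.comap (LinearMap.mulLeft R a) from this
  refine sup_le (Submodule.span_le.2 (Set.range_subset_iff.2 (mul_mem a ha))) fun y hy => ?_
  exact Submodule.mem_sup_right (I.smul_mem a hy)

lemma ker_eq_of_linearIndependent_comp {R A M N ι : Type*} [Ring R] [Semiring A] [SMul R A]
    [AddCommGroup M] [AddCommGroup N] [Module A M] [Module A N] [Module R M] [Module R N]
    [IsScalarTower R A M] [IsScalarTower R A N] {f : M →ₗ[A] N} {I : Submodule A M} {v : ι → M}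
    (le_ker : I ≤ LinearMap.ker f) (hv : LinearIndependent R (f ∘ v))
    (span_sup : Submodule.span R (Set.range v) ⊔ I.restrictScalars R = ⊤) :
    LinearMap.ker f = I := by
  have disjoint : Disjoint (Submodule.span R (Set.range v)) ((LinearMap.ker f).restrictScalars R) :=
    Submodule.range_ker_disjoint (f := f.restrictScalars R) hv
  refine Submodule.restrictScalars_injective R A M (Eq.symm ?_)
  refine eq_of_le_of_inf_le_of_sup_le (z := Submodule.span R (Set.range v)) le_ker ?_ ?_
  · exact disjoint.symm.le_bot.trans bot_le
  · rw [sup_comm (I.restrictScalars R), span_sup]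
    exact le_top

end SpanModuloSubmodule

lemma Sq1_mul_Sq1 : Sq1 * Sq1 = 0 := by
  simpa [Sq1] using RingQuot.mkAlgHom_rel (ZMod 2) A1Rel.sq1_sq1

lemma Sq2_mul_Sq2 : Sq2 * Sq2 = Sq3 * Sq1 := by
  simpa [Sq1, Sq2, Sq3] using RingQuot.mkAlgHom_rel (ZMod 2) A1Rel.adem

lemma Sq2_mul_Sq3_mul_Sq1 : Sq2 * Sq3 * Sq1 = Sq3 * Sq3 := by
  simpa [Sq1, Sq2, Sq3, mul_assoc] using RingQuot.mkAlgHom_rel (ZMod 2) A1Rel.top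

lemma Sq1_mul_Sq3 : Sq1 * Sq3 = 0 := by
  rw [Sq3, ← mul_assoc, Sq1_mul_Sq1, zero_mul]

lemma Sq3_mul_Sq2 : Sq3 * Sq2 = 0 := by
  rw [Sq3, mul_assoc, Sq2_mul_Sq2, ← mul_assoc, Sq1_mul_Sq3, zero_mul]

lemma Sq2_mul_Sq3_mul_Sq3 : Sq2 * Sq3 * Sq3 = 0 :=
  calc
    Sq2 * Sq3 * Sq3 = Sq2 * Sq3 * Sq1 * Sq2 := by rw [Sq3, ← mul_assoc (_ * _) Sq1]
    _ = Sq3 * (Sq3 * Sq2) := by rw [Sq2_mul_Sq3_mul_Sq1, mul_assoc]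
    _ = 0 := by rw [Sq3_mul_Sq2, mul_zero]

lemma adjoin_Sq1_Sq2 : Algebra.adjoin (ZMod 2) {Sq1, Sq2} = ⊤ := by
  have image_ι : RingQuot.mkAlgHom (ZMod 2) A1Rel '' Set.range (FreeAlgebra.ι (ZMod 2)) =
      {Sq1, Sq2} := by
    ext x
    simp [Fin.exists_fin_two, Sq1, Sq2, eq_comm]
  rw [← image_ι, ← AlgHom.map_adjoin, FreeAlgebra.adjoin_range_ι, Algebra.map_top,
    AlgHom.range_eq_top]
  exact RingQuot.mkAlgHom_surjective (ZMod 2) A1Rel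

section RegularRepresentation

open LinearMap (proj)

/-- Left multiplication by Sq¹ in the basis
`1, Sq¹, Sq², Sq¹Sq², Sq²Sq¹, Sq¹Sq²Sq¹, Sq²Sq¹Sq², Sq¹Sq²Sq¹Sq²` of A(1). The `i`-th entry is the
`i`-th coordinate of the product, as a functional of the coordinates of the right factor. -/
def Sq1End : Module.End (ZMod 2) (Fin 8 → ZMod 2) :=
  LinearMap.pi ![0, proj 0, 0, proj 2, 0, proj 4, 0, proj 6]

/-- Left multiplication by Sq², encoded as in `Sq1End`. -/
def Sq2End : Module.End (ZMod 2) (Fin 8 → ZMod 2) :=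
  LinearMap.pi ![0, 0, proj 0, 0, proj 1, proj 2, proj 3, proj 5]

lemma lift_Sq1End_Sq2End_eq_of_A1Rel ⦃x y : FreeAlgebra (ZMod 2) (Fin 2)⦄ (h : A1Rel x y) :
    FreeAlgebra.lift (ZMod 2) ![Sq1End, Sq2End] x =
      FreeAlgebra.lift (ZMod 2) ![Sq1End, Sq2End] y := by
  refine LinearMap.ext fun v => funext fun i => ?_
  cases h <;> fin_cases i <;> simp [Sq1End, Sq2End]

/-- The regular representation of A(1), in the coordinates of `Sq1End`. -/
def A1rep : A1 →ₐ[ZMod 2] Module.End (ZMod 2) (Fin 8 → ZMod 2) :=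
  RingQuot.liftAlgHom (ZMod 2)
    ⟨FreeAlgebra.lift (ZMod 2) ![Sq1End, Sq2End], lift_Sq1End_Sq2End_eq_of_A1Rel⟩

lemma A1rep_Sq1 : A1rep Sq1 = Sq1End := by
  simp [A1rep, Sq1]

lemma A1rep_Sq2 : A1rep Sq2 = Sq2End := by
  simp [A1rep, Sq2]

lemma linearIndependent_Sq3_Sq2_mul_Sq3_Sq3_mul_Sq3 :
    LinearIndependent (ZMod 2) ![Sq3, Sq2 * Sq3, Sq3 * Sq3] := by
  let coords : A1 →ₗ[ZMod 2] Fin 8 → ZMod 2 :=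
    LinearMap.applyₗ (Pi.single 0 1) ∘ₗ A1rep.toLinearMap
  have coords_eq : coords ∘ ![Sq3, Sq2 * Sq3, Sq3 * Sq3] =
      (fun i => Pi.single i 1) ∘ ![(3 : Fin 8), 6, 7] := by
    ext i j
    fin_cases i <;> fin_cases j <;>
      simp [coords, Sq3, A1rep_Sq1, A1rep_Sq2, Sq1End, Sq2End]
  refine LinearIndependent.of_comp coords ?_
  rw [coords_eq]
  exact (Pi.linearIndependent_single_one (Fin 8) (ZMod 2)).comp _ (by decide)

end RegularRepresentation

lemma span_one_Sq2_Sq3_sup_span_Sq1_Sq2_mul_Sq3 :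
    Submodule.span (ZMod 2) (Set.range ![1, Sq2, Sq3]) ⊔
      (Submodule.span A1 {Sq1, Sq2 * Sq3}).restrictScalars (ZMod 2) = ⊤ := by
  set W := Submodule.span (ZMod 2) (Set.range ![1, Sq2, Sq3])
  set I := Submodule.span A1 {Sq1, Sq2 * Sq3}
  have mem_W (i : Fin 3) : ![1, Sq2, Sq3] i ∈ W := Submodule.mem_span_of_mem ⟨i, rfl⟩
  have Sq1_mem_I : Sq1 ∈ I := Submodule.mem_span_of_mem (by simp)
  have Sq2_mul_Sq3_mem_I : Sq2 * Sq3 ∈ I := Submodule.mem_span_of_mem (by simp)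
  refine span_range_sup_restrictScalars_eq_top adjoin_Sq1_Sq2 (Submodule.mem_sup_left (mem_W 0)) ?_
  rintro _ (rfl | rfl)
  · refine Fin.forall_fin_succ.2 ⟨?_, Fin.forall_fin_two.2 ⟨?_, ?_⟩⟩
    · exact Submodule.mem_sup_right (show Sq1 * 1 ∈ I by rwa [mul_one])
    · exact Submodule.mem_sup_left (show Sq1 * Sq2 ∈ W from mem_W 2)
    · exact Submodule.mem_sup_right (show Sq1 * Sq3 ∈ I from Sq1_mul_Sq3 ▸ I.zero_mem)
  · refine Fin.forall_fin_succ.2 ⟨?_, Fin.forall_fin_two.2 ⟨?_, ?_⟩⟩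
    · exact Submodule.mem_sup_left (show Sq2 * 1 ∈ W from (mul_one Sq2).symm ▸ mem_W 1)
    · exact Submodule.mem_sup_right
        (show Sq2 * Sq2 ∈ I from Sq2_mul_Sq2 ▸ I.smul_mem Sq3 Sq1_mem_I)
    · exact Submodule.mem_sup_right (show Sq2 * Sq3 ∈ I from Sq2_mul_Sq3_mem_I)

lemma torsionOf_Sq3 : Ideal.torsionOf A1 A1 Sq3 = Submodule.span A1 {Sq1, Sq2 * Sq3} := by
  have le_ker : Submodule.span A1 {Sq1, Sq2 * Sq3} ≤ Ideal.torsionOf A1 A1 Sq3 := by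
    rw [Submodule.span_le]
    rintro _ (rfl | rfl)
    exacts [Sq1_mul_Sq3, Sq2_mul_Sq3_mul_Sq3]
  have comp_eq : LinearMap.toSpanSingleton A1 A1 Sq3 ∘ ![1, Sq2, Sq3] =
      ![Sq3, Sq2 * Sq3, Sq3 * Sq3] := by
    ext i
    fin_cases i <;> simp
  exact ker_eq_of_linearIndependent_comp le_ker
    (comp_eq ▸ linearIndependent_Sq3_Sq2_mul_Sq3_Sq3_mul_Sq3)
    span_one_Sq2_Sq3_sup_span_Sq1_Sq2_mul_Sq3

lemma mul_mem_A1deg {m n : ℕ} {x y : A1} (hx : x ∈ A1deg m) (hy : y ∈ A1deg n) :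
    x * y ∈ A1deg (m + n) := by
  suffices A1deg m * A1deg n ≤ A1deg (m + n) from this (Submodule.mul_mem_mul hx hy)
  rw [A1deg, A1deg, Submodule.span_mul_span, Submodule.span_le]
  rintro _ ⟨_, ⟨k, rfl, rfl⟩, _, ⟨l, rfl, rfl⟩, rfl⟩
  exact Submodule.subset_span ⟨k ++ l, by simp [A1wt], by simp [A1word]⟩

lemma Sq3_mem_A1deg : Sq3 ∈ A1deg 3 :=
  Submodule.subset_span ⟨[0, 1], by simp [A1wt], by simp [A1word, A1gen, Sq3]⟩

/-- Right multiplication by Sq³ = Sq¹Sq² on A(1) has kernel the left ideal generated by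
Sq¹ and Sq²Sq³; consequently there is a short exact sequence of graded left A(1)-modules
`0 → Σ³ A(1)/(Sq¹, Sq²Sq³) → A(1) → A(1)/(Sq³) → 0`, the first map sending the
generator to Sq³ (raising degrees by 3), the second the canonical projection. -/
theorem right_mul_sq3_kernel :
    (∀ x : A1, x * Sq3 = 0 ↔ x ∈ Submodule.span A1 {Sq1, Sq2 * Sq3}) ∧
    ∃ f : (A1 ⧸ (Submodule.span A1 {Sq1, Sq2 * Sq3})) →ₗ[A1] A1,
      f ((Submodule.span A1 {Sq1, Sq2 * Sq3}).mkQ 1) = Sq3 ∧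
      Function.Injective f ∧
      LinearMap.range f = LinearMap.ker (Submodule.span A1 {Sq3}).mkQ ∧
      (∀ n : ℕ, ∀ x ∈ A1qdeg (Submodule.span A1 {Sq1, Sq2 * Sq3}) n, f x ∈ A1deg (n + 3)) := by
  rw [← torsionOf_Sq3]
  refine ⟨fun x => (Ideal.mem_torsionOf_iff Sq3 x).symm,
    (Submodule.span A1 {Sq3}).subtype ∘ₗ
      (Ideal.quotTorsionOfEquivSpanSingleton A1 A1 Sq3).toLinearMap, ?_, ?_, ?_, ?_⟩
  · exact one_mul Sq3
  · exact (Submodule.injective_subtype _).comp (LinearEquiv.injective _)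
  · rw [LinearEquiv.range_comp, Submodule.range_subtype, Submodule.ker_mkQ]
  · rintro n _ ⟨x, hx, rfl⟩
    exact mul_mem_A1deg hx Sq3_mem_A1deg

end
end
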